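/- For every natural number n and every x ∈ F: Σ_{i=0}^n (-1)^i [n choose i]_q q^{i(i-1)/2} a_i [1,-x]^{n-i} = (-1)^n Σ_{i=0}^n (-1)^i [n choose i]_q a*_i x^{n-i}, where [1,-x]^m = Σ_{s=0}^m [m choose s]_q (-x)^{m-s}. In other words, A_n([1,-x]) = (-1)^n A*_n(x). -/

import Mathlib

open Finset

/-- The q-Pochhammer symbol `(a;q)_n = ∏_{j=0}^{n-1} (1 - a q^j)`. -/
def qPoch {F : Type*} [Field F] (q a : F) (n : ℕ) : F :=
  ∏ j ∈ Finset.range n, (1 - a * q ^ j)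

/-- The q-binomial coefficient `[n choose i]_q`, equal to 0 when `i > n`. -/
def qBinom {F : Type*} [Field F] (q : F) (n i : ℕ) : F :=
  if i ≤ n then qPoch q q n / (qPoch q q i * qPoch q q (n - i)) else 0

/-- The q-integer `[n]_q = (1-q^n)/(1-q)`. -/
def qInt {F : Type*} [Field F] (q : F) (n : ℕ) : F := (1 - q ^ n) / (1 - q)

/-- The q-dual sequence `a*_n = ∑_{i=0}^n (-1)^i [n choose i]_q q^{i(i-1)/2} a_i`. -/
def qDual {F : Type*} [Field F] (q : F) (a : ℕ → F) (n : ℕ) : F :=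
  ∑ i ∈ Finset.range (n + 1), (-1 : F) ^ i * qBinom q n i * q ^ (i.choose 2) * a i

/-- `[x,y]^m = ∑_{s=0}^m [m choose s]_q x^s y^{m-s}`. -/
def qBracket2 {F : Type*} [Field F] (q : F) (m : ℕ) (x y : F) : F :=
  ∑ s ∈ Finset.range (m + 1), qBinom q m s * x ^ s * y ^ (m - s)

/-!
For the convolution of sequences weighted by `q`-binomial coefficients, `[1, -x]^m` is the
convolution of the constant sequence `1` with `c k = (-x)^k`, and the `q`-dual of `a` is the
convolution of `b i = (-1)^i q^{i(i-1)/2} a i` with `1`. The identity is therefore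
`b ∗ (1 ∗ c) = (b ∗ 1) ∗ c`. Associativity holds because dividing the `n`-th term by `(q;q)_n`
turns the convolution into the product of power series.
-/

section QBinomialConvolution

variable {F : Type*} [Field F] {q : F} {n : ℕ}

lemma qPoch_ne_zero_of_le {a : F} {m : ℕ} (hmn : m ≤ n) (hn : qPoch q a n ≠ 0) :
    qPoch q a m ≠ 0 :=
  ne_zero_of_dvd_ne_zero hn (prod_dvd_prod_of_subset _ _ _ (range_mono hmn))

lemma qPoch_self_ne_zero (hq : ∀ m : ℕ, 0 < m → m ≤ n → q ^ m ≠ 1) : qPoch q q n ≠ 0 := by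
  refine prod_ne_zero_iff.2 fun j hj h => hq (j + 1) j.succ_pos (mem_range.1 hj) ?_
  rw [pow_succ']
  exact (sub_eq_zero.1 h).symm

/-- The `q`-binomial convolution `(f ∗ g)_n = ∑_{i=0}^n [n choose i]_q f_i g_{n-i}`, through which
both `[x, y]^m` and the `q`-dual are expressed. -/
def qConv (q : F) (f g : ℕ → F) (n : ℕ) : F :=
  ∑ i ∈ range (n + 1), qBinom q n i * f i * g (n - i)

/-- The Eulerian generating function `∑ f_n / (q;q)_n X^n`, which turns `q`-binomial convolution
into multiplication. A coefficient with `(q;q)_n = 0` is `0` by the convention for division. -/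
def eulerianGenFun (q : F) (f : ℕ → F) : PowerSeries F :=
  PowerSeries.mk fun n => f n / qPoch q q n

lemma qConv_eq_qPoch_mul_coeff (f g : ℕ → F) :
    qConv q f g n =
      qPoch q q n * PowerSeries.coeff n (eulerianGenFun q f * eulerianGenFun q g) := by
  simp only [PowerSeries.coeff_mul, eulerianGenFun, PowerSeries.coeff_mk]
  rw [Nat.sum_antidiagonal_eq_sum_range_succ fun i j => f i / qPoch q q i * (g j / qPoch q q j),
    mul_sum]
  refine sum_congr rfl fun i hi => ?_
  rw [qBinom, if_pos (mem_range_succ_iff.1 hi)]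
  ring

lemma coeff_eulerianGenFun_qConv (hn : qPoch q q n ≠ 0) (f g : ℕ → F) :
    PowerSeries.coeff n (eulerianGenFun q (qConv q f g)) =
      PowerSeries.coeff n (eulerianGenFun q f * eulerianGenFun q g) := by
  rw [eulerianGenFun, PowerSeries.coeff_mk, qConv_eq_qPoch_mul_coeff, mul_div_cancel_left₀ _ hn]

lemma coeff_mul_eulerianGenFun_qConv (hn : qPoch q q n ≠ 0) (P : PowerSeries F) (f g : ℕ → F) :
    PowerSeries.coeff n (P * eulerianGenFun q (qConv q f g)) =
      PowerSeries.coeff n (P * (eulerianGenFun q f * eulerianGenFun q g)) := by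
  rw [PowerSeries.coeff_mul, PowerSeries.coeff_mul]
  refine sum_congr rfl fun p hp => ?_
  rw [coeff_eulerianGenFun_qConv (qPoch_ne_zero_of_le (HasAntidiagonal.antidiagonal.snd_le hp) hn)]

lemma qConv_assoc (hn : qPoch q q n ≠ 0) (f g h : ℕ → F) :
    qConv q (qConv q f g) h n = qConv q f (qConv q g h) n := by
  rw [qConv_eq_qPoch_mul_coeff, qConv_eq_qPoch_mul_coeff, coeff_mul_eulerianGenFun_qConv hn,
    mul_comm (eulerianGenFun q (qConv q f g)), coeff_mul_eulerianGenFun_qConv hn,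
    mul_comm (eulerianGenFun q h), mul_assoc]

lemma qBracket2_eq_qConv (x y : F) :
    (fun m => qBracket2 q m x y) = qConv q (fun s => x ^ s) (fun s => y ^ s) :=
  rfl

lemma qDual_eq_qConv_one (a : ℕ → F) :
    qDual q a = qConv q (fun i => (-1) ^ i * q ^ i.choose 2 * a i) 1 := by
  funext n
  refine sum_congr rfl fun i _ => ?_
  rw [Pi.one_apply]
  ring

lemma qConv_neg_pow (f : ℕ → F) (x : F) :
    qConv q f (fun k => (-x) ^ k) n =
      (-1) ^ n * ∑ i ∈ range (n + 1), (-1) ^ i * qBinom q n i * f i * x ^ (n - i) := by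
  rw [qConv, mul_sum]
  refine sum_congr rfl fun i hi => ?_
  have hsign : (-1 : F) ^ (n - i) = (-1) ^ n * (-1) ^ i := by
    rw [← pow_sub_mul_pow (-1 : F) (mem_range_succ_iff.1 hi), mul_assoc, ← mul_pow]
    simp
  rw [neg_pow, hsign]
  ring

end QBinomialConvolution

theorem stmt14_general {F : Type*} [Field F] {q : F} {n : ℕ}
    (hq : ∀ m : ℕ, 0 < m → m ≤ n → q ^ m ≠ 1) (a : ℕ → F) (x : F) :
    ∑ i ∈ range (n + 1), (-1 : F) ^ i * qBinom q n i * q ^ (i.choose 2) *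
        a i * qBracket2 q (n - i) 1 (-x) =
    (-1 : F) ^ n * ∑ i ∈ range (n + 1), (-1 : F) ^ i * qBinom q n i *
        qDual q a i * x ^ (n - i) := by
  let b : ℕ → F := fun i => (-1) ^ i * q ^ i.choose 2 * a i
  have hone : (fun s => (1 : F) ^ s) = 1 := funext one_pow
  calc
    _ = qConv q b (fun m => qBracket2 q m 1 (-x)) n :=
      sum_congr rfl fun i _ => by ring
    _ = qConv q b (qConv q 1 fun k => (-x) ^ k) n := by rw [qBracket2_eq_qConv, hone]
    _ = qConv q (qConv q b 1) (fun k => (-x) ^ k) n :=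
      (qConv_assoc (qPoch_self_ne_zero hq) _ _ _).symm
    _ = qConv q (qDual q a) (fun k => (-x) ^ k) n := by rw [qDual_eq_qConv_one]
    _ = _ := qConv_neg_pow _ _

theorem stmt14 {F : Type*} [Field F] (q : F) (hq0 : q ≠ 0)
    (hq : ∀ m : ℕ, 0 < m → q ^ m ≠ 1) (a : ℕ → F) (n : ℕ) (x : F) :
    ∑ i ∈ Finset.range (n + 1), (-1 : F) ^ i * qBinom q n i * q ^ (i.choose 2) *
        a i * qBracket2 q (n - i) 1 (-x) =
    (-1 : F) ^ n * ∑ i ∈ Finset.range (n + 1), (-1 : F) ^ i * qBinom q n i *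
        qDual q a i * x ^ (n - i) :=
  stmt14_general (fun m hm _ => hq m hm) a x
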